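/- arXiv:math/0403484 — 2 statements merged into one kernel-verified Lean document; each statement's English description precedes it below -/
import Mathlib

section
/- If p and q are nonzero bivariate polynomials over an algebraically closed field whose leading homogeneous forms (of degrees n and m respectively) have no common nontrivial zero, then the system p(x,y)=0, q(x,y)=0 has at most n·m solutions. -/
open MvPolynomial

/-!
A common factor of `p` and `q` would have positive degree, so its leading form would vanish at some
nonzero point, where the leading forms of `p` and `q` would both vanish; hence `p` and `q` are
coprime. Let `V d` be the space of polynomials of total degree at most `d`. If `S` is a finite set
of common zeros and `e ≥ |S|`, then evaluation on `S` maps `V (n + m + e)` onto `k ^ S` and kills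
`p V (m + e) + q V (n + e)`. By coprimality the two summands meet in `p q V e`, so counting
dimensions gives `|S| ≤ dim V (n + m + e) - dim V (m + e) - dim V (n + e) + dim V e`, and in two
variables the right-hand side is exactly `n m`.
-/

section LeadingForm

variable {σ R : Type*} [CommSemiring R]

lemma homogeneousComponent_add_mul_of_totalDegree_le {f g : MvPolynomial σ R} {r s : ℕ}
    (hf : f.totalDegree ≤ r) (hg : g.totalDegree ≤ s) :
    homogeneousComponent (r + s) (f * g) =
      homogeneousComponent r f * homogeneousComponent s g := by
  classical
  have coeff_eq_zero {u : MvPolynomial σ R} {t : ℕ} (hu : u.totalDegree ≤ t) {c : σ →₀ ℕ}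
      (hc : t < c.degree) : coeff c u = 0 :=
    coeff_eq_zero_of_totalDegree_lt (hu.trans_lt hc)
  ext d
  by_cases hd : d.degree = r + s
  · rw [coeff_homogeneousComponent, if_pos hd, coeff_mul, coeff_mul]
    refine Finset.sum_congr rfl fun ⟨a, b⟩ hab ↦ ?_
    have hdeg : a.degree + b.degree = r + s := by
      rw [← map_add, Finset.HasAntidiagonal.mem_antidiagonal.mp hab, hd]
    rcases lt_trichotomy a.degree r with ha | ha | ha
    · simp [coeff_homogeneousComponent, ha.ne, coeff_eq_zero hg (c := b) (by omega)]
    · simp [coeff_homogeneousComponent, ha, show b.degree = s by omega]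
    · simp [coeff_homogeneousComponent, coeff_eq_zero hf ha]
  · rw [(homogeneousComponent_isHomogeneous _ _).coeff_eq_zero hd,
      ((homogeneousComponent_isHomogeneous r f).mul
        (homogeneousComponent_isHomogeneous s g)).coeff_eq_zero hd]

/-- The leading form of a polynomial: its homogeneous component of top total degree. The leading
form of `0` is `0`. -/
noncomputable def leadingForm (p : MvPolynomial σ R) : MvPolynomial σ R :=
  homogeneousComponent p.totalDegree p

lemma leadingForm_zero : leadingForm (0 : MvPolynomial σ R) = 0 :=
  map_zero _

lemma leadingForm_isHomogeneous (p : MvPolynomial σ R) :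
    (leadingForm p).IsHomogeneous p.totalDegree :=
  homogeneousComponent_isHomogeneous _ _

lemma leadingForm_mul [NoZeroDivisors R] (p q : MvPolynomial σ R) :
    leadingForm (p * q) = leadingForm p * leadingForm q := by
  rcases eq_or_ne p 0 with rfl | hp
  · simp only [zero_mul, leadingForm_zero]
  rcases eq_or_ne q 0 with rfl | hq
  · simp only [mul_zero, leadingForm_zero]
  rw [leadingForm, totalDegree_mul_of_isDomain hp hq,
    homogeneousComponent_add_mul_of_totalDegree_le le_rfl le_rfl, leadingForm, leadingForm]

lemma eval_leadingForm_eq_zero_of_dvd [NoZeroDivisors R] {p q : MvPolynomial σ R} (h : p ∣ q)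
    {x : σ → R} (hx : eval x (leadingForm p) = 0) : eval x (leadingForm q) = 0 := by
  obtain ⟨r, rfl⟩ := h
  rw [leadingForm_mul, map_mul, hx, zero_mul]

end LeadingForm

section AlgebraicallyClosed

variable {k : Type*} [Field k] [IsAlgClosed k]

-- Dehomogenize to `f(t) = h(t, 1)`: a root of `f` is a zero of `h`, and a constant `f` forces `h`
-- to be a multiple of `X 1 ^ r`, which vanishes at `(1, 0)`.
lemma exists_ne_zero_eval_eq_zero_of_isHomogeneous {h : MvPolynomial (Fin 2) k} {r : ℕ}
    (hr : r ≠ 0) (hh : h.IsHomogeneous r) : ∃ x : Fin 2 → k, x ≠ 0 ∧ eval x h = 0 := by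
  let f : Polynomial k := aeval ![Polynomial.X, 1] h
  have homogenize_f : f.homogenize r = h := Polynomial.homogenize_eq_of_isHomogeneous hh rfl
  by_cases hf : f.degree = 0
  · refine ⟨![1, 0], by simp, ?_⟩
    rw [← homogenize_f, Polynomial.eq_C_of_degree_eq_zero hf, Polynomial.homogenize_C]
    simp [hr]
  · obtain ⟨t, ht⟩ := IsAlgClosed.exists_root f hf
    refine ⟨![t, 1], by simp, ?_⟩
    have eval_f : f.eval t = eval ![t, 1] h := by
      simp [f, aeval_def, eval₂_eq', eval_eq', Polynomial.eval_finsetSum, Fin.prod_univ_two]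
    rw [← eval_f, ht]

lemma exists_ne_zero_eval_leadingForm_eq_zero {g : MvPolynomial (Fin 2) k} (hg : ¬IsUnit g) :
    ∃ x : Fin 2 → k, x ≠ 0 ∧ eval x (leadingForm g) = 0 := by
  rcases eq_or_ne g.totalDegree 0 with hdeg | hdeg
  · obtain rfl : g = 0 := by
      rw [totalDegree_eq_zero_iff_eq_C] at hdeg
      rw [hdeg, isUnit_map_iff, isUnit_iff_ne_zero, not_not] at hg
      rw [hdeg, hg, C_0]
    exact ⟨1, one_ne_zero, by rw [leadingForm_zero, map_zero]⟩
  · exact exists_ne_zero_eval_eq_zero_of_isHomogeneous hdeg (leadingForm_isHomogeneous g)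

lemma isRelPrime_of_forall_eval_leadingForm {p q : MvPolynomial (Fin 2) k}
    (h : ∀ x : Fin 2 → k, x ≠ 0 →
      ¬(eval x (leadingForm p) = 0 ∧ eval x (leadingForm q) = 0)) : IsRelPrime p q := by
  intro g hgp hgq
  by_contra hg
  obtain ⟨x, hx, hgx⟩ := exists_ne_zero_eval_leadingForm_eq_zero hg
  exact h x hx
    ⟨eval_leadingForm_eq_zero_of_dvd hgp hgx, eval_leadingForm_eq_zero_of_dvd hgq hgx⟩

end AlgebraicallyClosed

lemma card_finsupp_sum_le (σ : Type*) [Fintype σ] (d : ℕ) :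
    Nat.card {s : σ →₀ ℕ | (s.sum fun _ e ↦ e) ≤ d} =
      (d + Fintype.card σ).choose (Fintype.card σ) := by
  classical
  have hset : {s : σ →₀ ℕ | (s.sum fun _ e ↦ e) ≤ d} =
      ((Finset.range (d + 1)).biUnion fun i ↦ Finset.univ.finsuppAntidiag i :
        Finset (σ →₀ ℕ)) := by
    ext s
    simp [Finsupp.sum_fintype]
  have hdisj : ((Finset.range (d + 1) : Finset ℕ) : Set ℕ).PairwiseDisjoint
      fun i ↦ (Finset.univ : Finset σ).finsuppAntidiag i := fun i _ j _ hij ↦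
    Finset.disjoint_left.mpr fun s hi hj ↦ hij <|
      (Finset.mem_finsuppAntidiag.mp hi).1.symm.trans (Finset.mem_finsuppAntidiag.mp hj).1
  rw [hset, Nat.card_coe_set_eq, Set.ncard_coe_finset, Finset.card_biUnion hdisj]
  simp only [Finset.card_finsuppAntidiag_nat_eq_multichoose, Finset.card_univ,
    Nat.sum_range_multichoose]

lemma finrank_restrictTotalDegree (σ R : Type*) [Fintype σ] [CommRing R] [Nontrivial R] (d : ℕ) :
    Module.finrank R (restrictTotalDegree σ R d) =
      (d + Fintype.card σ).choose (Fintype.card σ) :=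
  (Module.finrank_eq_nat_card_basis (basisRestrictSupport R _)).trans (card_finsupp_sum_le σ d)

lemma choose_two_add_choose_two (a n m : ℕ) :
    (n + m + a).choose 2 + a.choose 2 = (m + a).choose 2 + (n + a).choose 2 + n * m := by
  qify
  simp only [Nat.cast_choose_two, Nat.cast_add]
  ring

section BoundedMultiples

variable {σ R : Type*} [CommRing R]

/-- The space `p V_d` of multiples of `p` by polynomials of total degree at most `d`. -/
noncomputable def boundedMultiples (p : MvPolynomial σ R) (d : ℕ) :
    Submodule R (MvPolynomial σ R) :=
  (restrictTotalDegree σ R d).map (LinearMap.mulLeft R p)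

lemma mem_boundedMultiples [IsDomain R] {p f : MvPolynomial σ R} (hp : p ≠ 0) {d : ℕ} :
    f ∈ boundedMultiples p d ↔ p ∣ f ∧ f.totalDegree ≤ p.totalDegree + d := by
  simp only [boundedMultiples, Submodule.mem_map, mem_restrictTotalDegree,
    LinearMap.mulLeft_apply]
  constructor
  · rintro ⟨g, hg, rfl⟩
    exact ⟨dvd_mul_right p g, (totalDegree_mul p g).trans (by omega)⟩
  · rintro ⟨⟨g, rfl⟩, hpg⟩
    refine ⟨g, ?_, rfl⟩
    rcases eq_or_ne g 0 with rfl | hg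
    · simp
    · rw [totalDegree_mul_of_isDomain hp hg] at hpg
      omega

instance [Finite σ] (p : MvPolynomial σ R) (d : ℕ) : Module.Finite R (boundedMultiples p d) :=
  Module.Finite.map _ _

lemma finrank_boundedMultiples [IsDomain R] {p : MvPolynomial σ R} (hp : p ≠ 0) (d : ℕ) :
    Module.finrank R (boundedMultiples p d) = Module.finrank R (restrictTotalDegree σ R d) :=
  (Submodule.equivMapOfInjective (LinearMap.mulLeft R p) (mul_right_injective₀ hp)
    (restrictTotalDegree σ R d)).finrank_eq.symm

lemma boundedMultiples_inf_boundedMultiples [IsDomain R] [UniqueFactorizationMonoid R]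
    {p q : MvPolynomial σ R} (hp : p ≠ 0) (hq : q ≠ 0) (hpq : IsRelPrime p q) (e : ℕ) :
    boundedMultiples p (q.totalDegree + e) ⊓ boundedMultiples q (p.totalDegree + e) =
      boundedMultiples (p * q) e := by
  have mul_dvd_iff (f : MvPolynomial σ R) : p * q ∣ f ↔ p ∣ f ∧ q ∣ f :=
    ⟨fun h ↦ ⟨dvd_of_mul_right_dvd h, dvd_of_mul_left_dvd h⟩, fun h ↦ hpq.mul_dvd h.1 h.2⟩
  ext f
  rw [Submodule.mem_inf, mem_boundedMultiples hp, mem_boundedMultiples hq,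
    mem_boundedMultiples (mul_ne_zero hp hq), mul_dvd_iff, totalDegree_mul_of_isDomain hp hq]
  grind

lemma finrank_boundedMultiples_sup {k : Type*} [Field k] [Finite σ] {p q : MvPolynomial σ k}
    (hp : p ≠ 0) (hq : q ≠ 0) (hpq : IsRelPrime p q) (e : ℕ) :
    Module.finrank k ↥(boundedMultiples p (q.totalDegree + e) ⊔
        boundedMultiples q (p.totalDegree + e)) +
      Module.finrank k (restrictTotalDegree σ k e) =
    Module.finrank k (restrictTotalDegree σ k (q.totalDegree + e)) +
      Module.finrank k (restrictTotalDegree σ k (p.totalDegree + e)) := by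
  rw [← finrank_boundedMultiples hp (q.totalDegree + e),
    ← finrank_boundedMultiples hq (p.totalDegree + e),
    ← finrank_boundedMultiples (mul_ne_zero hp hq) e,
    ← boundedMultiples_inf_boundedMultiples hp hq hpq, Submodule.finrank_sup_add_finrank_inf_eq]

end BoundedMultiples

section EvalOn

variable {σ R : Type*} [CommRing R]

/-- Evaluation of polynomials at the points of a finite set `S`, as a linear map to `R ^ S`. -/
noncomputable def evalOn (S : Finset (σ → R)) : MvPolynomial σ R →ₗ[R] (S → R) :=
  LinearMap.funLeft R R Subtype.val ∘ₗ evalₗ R σ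

@[simp]
lemma evalOn_apply (S : Finset (σ → R)) (f : MvPolynomial σ R) (z : S) :
    evalOn S f z = eval z.1 f := rfl

lemma boundedMultiples_le_ker_evalOn {S : Finset (σ → R)} {p : MvPolynomial σ R}
    (hS : ∀ z ∈ S, eval z p = 0) (d : ℕ) : boundedMultiples p d ≤ LinearMap.ker (evalOn S) := by
  rintro _ ⟨f, -, rfl⟩
  ext z
  simp [hS z z.2]

end EvalOn

section Interpolation

variable {σ k : Type*} [Field k]

lemma exists_totalDegree_le_one_of_ne {z w : σ → k} (h : w ≠ z) :
    ∃ l : MvPolynomial σ k, l.totalDegree ≤ 1 ∧ eval z l = 1 ∧ eval w l = 0 := by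
  obtain ⟨i, hi⟩ := Function.ne_iff.mp h
  have hi' : z i - w i ≠ 0 := sub_ne_zero.mpr hi.symm
  refine ⟨C (z i - w i)⁻¹ * (X i - C (w i)), ?_, by simp [hi'], by simp⟩
  calc (C (z i - w i)⁻¹ * (X i - C (w i))).totalDegree
      ≤ (C (z i - w i)⁻¹ : MvPolynomial σ k).totalDegree + (X i - C (w i)).totalDegree :=
        totalDegree_mul _ _
    _ ≤ 1 := by simpa using totalDegree_sub (X i) (C (w i) : MvPolynomial σ k)

lemma exists_totalDegree_le_card_of_notMem {S : Finset (σ → k)} {z : σ → k} (hz : z ∉ S) :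
    ∃ f : MvPolynomial σ k, f.totalDegree ≤ S.card ∧ eval z f = 1 ∧ ∀ w ∈ S, eval w f = 0 := by
  choose! l l_deg l_one l_zero using
    fun (w : σ → k) (hw : w ∈ S) ↦ exists_totalDegree_le_one_of_ne (ne_of_mem_of_not_mem hw hz)
  refine ⟨∏ w ∈ S, l w, ?_, ?_, fun w hw ↦ ?_⟩
  · calc (∏ w ∈ S, l w).totalDegree ≤ ∑ w ∈ S, (l w).totalDegree := totalDegree_finsetProd _ _
      _ ≤ S.card := by simpa using Finset.sum_le_sum l_deg
  · rw [map_prod, Finset.prod_eq_one l_one]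
  · rw [map_prod, Finset.prod_eq_zero hw (l_zero w hw)]

lemma map_evalOn_restrictTotalDegree {S : Finset (σ → k)} {d : ℕ} (hd : S.card ≤ d + 1) :
    (restrictTotalDegree σ k d).map (evalOn S) = ⊤ := by
  classical
  rw [eq_top_iff, ← (Pi.basisFun k S).span_eq, Submodule.span_le]
  rintro _ ⟨z, rfl⟩
  obtain ⟨f, f_deg, f_one, f_zero⟩ :=
    exists_totalDegree_le_card_of_notMem (S.notMem_erase z.1)
  rw [Finset.card_erase_of_mem z.2] at f_deg
  refine ⟨f, (mem_restrictTotalDegree _ _ _).mpr (by omega), ?_⟩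
  ext w
  rcases eq_or_ne w z with rfl | hw
  · simp [f_one]
  · have hw' : w.1 ∈ S.erase z := Finset.mem_erase.mpr ⟨Subtype.coe_ne_coe.mpr hw, w.2⟩
    simp [f_zero w hw', hw]

lemma card_add_finrank_le_of_le_ker_evalOn [Finite σ] {S : Finset (σ → k)} {d : ℕ}
    (hd : S.card ≤ d + 1) {W : Submodule k (MvPolynomial σ k)}
    (hW : W ≤ restrictTotalDegree σ k d) (hWS : W ≤ LinearMap.ker (evalOn S)) :
    S.card + Module.finrank k W ≤ Module.finrank k (restrictTotalDegree σ k d) := by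
  let ev := (evalOn S).domRestrict (restrictTotalDegree σ k d)
  have finrank_range : Module.finrank k (LinearMap.range ev) = S.card := by
    rw [LinearMap.range_domRestrict, map_evalOn_restrictTotalDegree hd, finrank_top,
      Module.finrank_fintype_fun_eq_card, Fintype.card_coe]
  have finrank_ker : Module.finrank k W ≤ Module.finrank k (LinearMap.ker ev) := by
    rw [← (Submodule.comapSubtypeEquivOfLe hW).finrank_eq]
    exact Submodule.finrank_mono fun f hf ↦ hWS hf
  rw [← ev.finrank_range_add_finrank_ker, finrank_range]
  gcongr

end Interpolation

section CommonZeros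

variable {σ k : Type*} [Field k]

lemma card_commonZeros_add_finrank_le [Finite σ] {p q : MvPolynomial σ k} (hp : p ≠ 0)
    (hq : q ≠ 0) (hpq : IsRelPrime p q) {S : Finset (σ → k)}
    (hS : ∀ z ∈ S, eval z p = 0 ∧ eval z q = 0) :
    S.card + (Module.finrank k (restrictTotalDegree σ k (q.totalDegree + S.card)) +
        Module.finrank k (restrictTotalDegree σ k (p.totalDegree + S.card))) ≤
      Module.finrank k (restrictTotalDegree σ k (p.totalDegree + q.totalDegree + S.card)) +
        Module.finrank k (restrictTotalDegree σ k S.card) := by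
  rw [← finrank_boundedMultiples_sup hp hq hpq, ← add_assoc]
  gcongr
  apply card_add_finrank_le_of_le_ker_evalOn
  · omega
  · refine sup_le (fun f hf ↦ ?_) (fun f hf ↦ ?_)
    · have := ((mem_boundedMultiples hp).mp hf).2
      exact (mem_restrictTotalDegree _ _ _).mpr (by omega)
    · have := ((mem_boundedMultiples hq).mp hf).2
      exact (mem_restrictTotalDegree _ _ _).mpr (by omega)
  · exact sup_le (boundedMultiples_le_ker_evalOn (fun z hz ↦ (hS z hz).1) _)
      (boundedMultiples_le_ker_evalOn (fun z hz ↦ (hS z hz).2) _)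

lemma card_commonZeros_le {p q : MvPolynomial (Fin 2) k} (hpq : IsRelPrime p q)
    {S : Finset (Fin 2 → k)} (hS : ∀ z ∈ S, eval z p = 0 ∧ eval z q = 0) :
    S.card ≤ p.totalDegree * q.totalDegree := by
  have S_empty_of_isUnit (h : IsUnit p ∨ IsUnit q) : S = ∅ :=
    Finset.eq_empty_of_forall_notMem fun z hz ↦ h.elim
      (fun hp ↦ (hp.map (eval z)).ne_zero (hS z hz).1)
      (fun hq ↦ (hq.map (eval z)).ne_zero (hS z hz).2)
  rcases eq_or_ne p 0 with rfl | hp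
  · simp [S_empty_of_isUnit (.inr (isRelPrime_zero_left.mp hpq))]
  rcases eq_or_ne q 0 with rfl | hq
  · simp [S_empty_of_isUnit (.inl (isRelPrime_zero_right.mp hpq))]
  have hcard := card_commonZeros_add_finrank_le hp hq hpq hS
  simp only [finrank_restrictTotalDegree, Fintype.card_fin, add_assoc _ S.card 2] at hcard
  have hchoose := choose_two_add_choose_two (S.card + 2) p.totalDegree q.totalDegree
  omega

end CommonZeros

theorem stmt0_general {k : Type*} [Field k] {p q : MvPolynomial (Fin 2) k}
    (hpq : IsRelPrime p q) :
    {z : k × k | eval ![z.1, z.2] p = 0 ∧ eval ![z.1, z.2] q = 0}.Finite ∧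
    {z : k × k | eval ![z.1, z.2] p = 0 ∧ eval ![z.1, z.2] q = 0}.ncard ≤
      p.totalDegree * q.totalDegree := by
  rw [← Set.encard_le_coe_iff_finite_ncard_le]
  refine Cardinal.toENat_le_natCast.mpr <|
    Cardinal.mk_le_iff_forall_finset_subset_card_le.mpr fun T hT ↦ ?_
  rw [← T.card_map (finTwoArrowEquiv k).symm.toEmbedding]
  refine card_commonZeros_le hpq fun z hz ↦ ?_
  obtain ⟨w, hw, rfl⟩ := Finset.mem_map.mp hz
  exact hT hw

theorem stmt0 {k : Type*} [Field k] [IsAlgClosed k]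
    (p q : MvPolynomial (Fin 2) k) (n m : ℕ)
    (hp : p ≠ 0) (hq : q ≠ 0)
    (hpn : p.totalDegree = n) (hqm : q.totalDegree = m)
    (hlead : ∀ a b : k, ¬(a = 0 ∧ b = 0) →
      ¬(eval ![a, b] (homogeneousComponent n p) = 0 ∧
        eval ![a, b] (homogeneousComponent m q) = 0)) :
    {z : k × k | eval ![z.1, z.2] p = 0 ∧ eval ![z.1, z.2] q = 0}.Finite ∧
    {z : k × k | eval ![z.1, z.2] p = 0 ∧ eval ![z.1, z.2] q = 0}.ncard ≤ n * m := by
  subst hpn hqm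
  exact stmt0_general (isRelPrime_of_forall_eval_leadingForm
    ((finTwoArrowEquiv k).symm.surjective.forall.mpr fun z hz ↦
      hlead z.1 z.2 (by simpa using hz)))
end

section
/- Let P, Q ∈ k[x,y] be homogeneous of degrees n and m over an algebraically closed field k with no common nontrivial zero. Then the quotient ring k[x,y]/(P,Q) is a finite-dimensional k-vector space of dimension n·m. -/
open MvPolynomial

/-! The dimension is additive in the factors of `P`: if `f` is a nonzerodivisor and `h` is a
nonzerodivisor modulo `f`, multiplication by `f` gives an exact sequence
`0 → R/(g, h) → R/(fg, h) → R/(f, h) → 0`. Over an algebraically closed field, dehomogenizing shows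
that `P` is a product of `n` linear forms. A linear form `L` vanishing at `v` generates the kernel
of restriction to the line through `v`, where `Q` becomes `Q(v) t ^ m` with `Q(v) ≠ 0`; so
`k[x, y]/(L, Q)` is `k[t]/(t ^ m)`, and each of the `n` factors contributes `m` to the dimension. -/

section Quotient

variable {k R S : Type*} [CommRing k] [CommRing R] [Algebra k R] [CommRing S] [Algebra k S]

lemma mul_mem_span_mul_pair_iff {f h : R} (hf : IsLeftRegular f)
    (hfh : ∀ r, f ∣ r * h → f ∣ r) (g r : R) :
    f * r ∈ Ideal.span {f * g, h} ↔ r ∈ Ideal.span {g, h} := by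
  simp only [Ideal.mem_span_pair]
  constructor
  · rintro ⟨a, b, hab⟩
    have hdvd : f ∣ b * h := ⟨r - a * g, by linear_combination hab⟩
    obtain ⟨c, rfl⟩ := hfh b hdvd
    exact ⟨a, c, hf (by linear_combination hab)⟩
  · rintro ⟨a, b, rfl⟩
    exact ⟨a, f * b, by ring⟩

lemma mem_span_pair_iff_exists_sub_mul_mem (f g h r : R) :
    r ∈ Ideal.span {f, h} ↔ ∃ s, f * s - r ∈ Ideal.span {f * g, h} := by
  simp only [Ideal.mem_span_pair]
  constructor
  · rintro ⟨a, b, rfl⟩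
    exact ⟨a, 0, -b, by ring⟩
  · rintro ⟨s, a, b, hab⟩
    exact ⟨s - a * g, -b, by linear_combination -hab⟩

theorem length_quotient_span_mul_pair {f h : R} (hf : IsLeftRegular f)
    (hfh : ∀ r, f ∣ r * h → f ∣ r) (g : R) :
    Module.length k (R ⧸ Ideal.span {f * g, h}) =
      Module.length k (R ⧸ Ideal.span {g, h}) + Module.length k (R ⧸ Ideal.span {f, h}) := by
  have hmem := mul_mem_span_mul_pair_iff hf hfh g
  have hle : Ideal.span {f * g, h} ≤ Ideal.span {f, h} := fun r hr ↦
    (mem_span_pair_iff_exists_sub_mul_mem f g h r).2 ⟨0, by simpa using hr⟩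
  let mulF : (R ⧸ Ideal.span {g, h}) →ₗ[R] R ⧸ Ideal.span {f * g, h} :=
    Submodule.mapQ _ _ (LinearMap.mulLeft R f) fun r hr ↦ (hmem r).2 hr
  let proj : (R ⧸ Ideal.span {f * g, h}) →ₗ[R] R ⧸ Ideal.span {f, h} := Submodule.factor hle
  have hinj : Function.Injective mulF := by
    refine (injective_iff_map_eq_zero mulF).2 (Ideal.Quotient.mk_surjective.forall.2 fun r hr ↦ ?_)
    exact Ideal.Quotient.eq_zero_iff_mem.2 ((hmem r).1 (Ideal.Quotient.eq_zero_iff_mem.1 hr))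
  have hexact : Function.Exact mulF proj := by
    refine Ideal.Quotient.mk_surjective.forall.2 fun r ↦ ?_
    calc
      Ideal.Quotient.mk (Ideal.span {f, h}) r = 0 ↔ ∃ s, f * s - r ∈ Ideal.span {f * g, h} :=
        Ideal.Quotient.eq_zero_iff_mem.trans (mem_span_pair_iff_exists_sub_mul_mem f g h r)
      _ ↔ ∃ s, mulF (Ideal.Quotient.mk _ s) = Ideal.Quotient.mk _ r :=
        exists_congr fun _ ↦ (Ideal.Quotient.mk_eq_mk_iff_sub_mem _ _).symm
      _ ↔ Ideal.Quotient.mk _ r ∈ Set.range mulF :=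
        (Ideal.Quotient.mk_surjective.exists (p := (mulF · = Ideal.Quotient.mk _ r))).symm
  exact Module.length_eq_add_of_exact (mulF.restrictScalars k) (proj.restrictScalars k)
    hinj (Submodule.factor_surjective hle) hexact

theorem length_quotient_span_pair_eq_of_ker_eq {φ : R →ₐ[k] S} (hφ : Function.Surjective φ) {f : R}
    (hker : RingHom.ker φ = Ideal.span {f}) (h : R) :
    Module.length k (R ⧸ Ideal.span {f, h}) = Module.length k (S ⧸ Ideal.span {φ h}) := by
  let ψ := (Ideal.Quotient.mkₐ k (Ideal.span {φ h})).comp φ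
  have hψ : Function.Surjective ψ := (Ideal.Quotient.mkₐ_surjective k _).comp hφ
  have hkerψ : RingHom.ker ψ = Ideal.span {f, h} := calc
    RingHom.ker ψ = (Ideal.span {φ h}).comap φ := by
      ext r
      exact Ideal.Quotient.eq_zero_iff_mem
    _ = ((Ideal.span {h}).map φ).comap φ := by rw [Ideal.map_span, Set.image_singleton]
    _ = Ideal.span {h} ⊔ RingHom.ker φ := Ideal.comap_map_of_surjective φ hφ _
    _ = Ideal.span {f, h} := by rw [hker, sup_comm, ← Ideal.span_insert]
  rw [← hkerψ]
  exact (Ideal.quotientKerAlgEquivOfSurjective hψ).toLinearEquiv.length_eq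

end Quotient

section Line

variable {σ R : Type*} [CommRing R]

/-- The restriction of polynomial functions to the line through the origin and `v`, parametrized by
`t ↦ t v`. -/
noncomputable def restrictLine (v : σ → R) : MvPolynomial σ R →ₐ[R] Polynomial R :=
  aeval fun i ↦ Polynomial.C (v i) * Polynomial.X

lemma restrictLine_X (v : σ → R) (i : σ) :
    restrictLine v (X i) = Polynomial.C (v i) * Polynomial.X :=
  aeval_X _ i

lemma restrictLine_of_isHomogeneous (v : σ → R) {P : MvPolynomial σ R} {n : ℕ}
    (hP : P.IsHomogeneous n) :
    restrictLine v P = Polynomial.C (eval v P) * Polynomial.X ^ n := by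
  rw [restrictLine, aeval_def, eval₂_eq, eval_eq, map_sum, Finset.sum_mul]
  refine Finset.sum_congr rfl fun d hd ↦ ?_
  have hdeg : n = ∑ i ∈ d.support, d i := hP.degree_eq_sum_deg_support hd
  simp only [hdeg, mul_pow, Finset.prod_mul_distrib, Finset.prod_pow_eq_pow_sum,
    Polynomial.algebraMap_eq, map_mul, map_prod, map_pow, mul_assoc]

/-- The linear form `v₁ x - v₀ y`, which defines the line through the origin and `v`. -/
noncomputable def linearForm (v : Fin 2 → R) : MvPolynomial (Fin 2) R :=
  C (v 1) * X 0 - C (v 0) * X 1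

lemma eval_eq_zero_of_linearForm_dvd {v : Fin 2 → R} {P : MvPolynomial (Fin 2) R}
    (h : linearForm v ∣ P) : eval v P = 0 := by
  obtain ⟨P', rfl⟩ := h
  simp [linearForm, mul_comm]

lemma restrictLine_linearForm (v : Fin 2 → R) : restrictLine v (linearForm v) = 0 := by
  simp only [linearForm, map_sub, map_mul, restrictLine_X, algHom_C, Polynomial.algebraMap_eq]
  ring

/-- For `w` with `w ⬝ v = 1`, the map `p ↦ p (w₀ x + w₁ y)`, a section of `restrictLine v`. -/
noncomputable def extendLine (w : Fin 2 → R) : Polynomial R →ₐ[R] MvPolynomial (Fin 2) R :=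
  Polynomial.aeval (C (w 0) * X 0 + C (w 1) * X 1)

section
variable {v w : Fin 2 → R} (hwv : w 0 * v 0 + w 1 * v 1 = 1)
include hwv

lemma restrictLine_extendLine (p : Polynomial R) : restrictLine v (extendLine w p) = p := by
  have hcomp : (restrictLine v).comp (extendLine w) = AlgHom.id R _ := by
    ext1
    have hC := congrArg Polynomial.C hwv
    simp only [map_add, map_mul, map_one] at hC
    simp only [extendLine, AlgHom.comp_apply, Polynomial.aeval_X, map_add, map_mul, restrictLine_X,
      algHom_C, Polynomial.algebraMap_eq, AlgHom.id_apply]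
    linear_combination Polynomial.X * hC
  exact DFunLike.congr_fun hcomp p

lemma linearForm_dvd_extendLine_restrictLine_sub (P : MvPolynomial (Fin 2) R) :
    linearForm v ∣ extendLine w (restrictLine v P) - P := by
  let mkL := Ideal.Quotient.mkₐ R (Ideal.span {linearForm v})
  have hC : (C (w 0) * C (v 0) + C (w 1) * C (v 1) : MvPolynomial (Fin 2) R) = 1 := by
    simp only [← C_mul, ← C_add, hwv, C_1]
  have hX : ∀ i, linearForm v ∣ extendLine w (restrictLine v (X i)) - X i := by
    simp only [restrictLine_X, extendLine, map_mul, Polynomial.aeval_C, Polynomial.aeval_X,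
      algebraMap_eq]
    refine Fin.forall_fin_two.2 ⟨?_, ?_⟩
    · exact ⟨-C (w 1), by simp only [linearForm]; linear_combination X 0 * hC⟩
    · exact ⟨C (w 0), by simp only [linearForm]; linear_combination X 1 * hC⟩
  have hcomp : mkL.comp ((extendLine w).comp (restrictLine v)) = mkL :=
    algHom_ext fun i ↦ (Ideal.Quotient.mk_eq_mk_iff_sub_mem _ _).2
      (Ideal.mem_span_singleton.2 (hX i))
  exact Ideal.mem_span_singleton.1
    ((Ideal.Quotient.mk_eq_mk_iff_sub_mem _ _).1 (DFunLike.congr_fun hcomp P))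

end

variable {v : Fin 2 → R} (hv : IsCoprime (v 0) (v 1))
include hv

lemma restrictLine_surjective : Function.Surjective (restrictLine v) := by
  obtain ⟨a, b, hab⟩ := hv
  exact fun p ↦ ⟨_, restrictLine_extendLine (w := ![a, b]) hab p⟩

lemma ker_restrictLine : RingHom.ker (restrictLine v) = Ideal.span {linearForm v} := by
  obtain ⟨a, b, hab⟩ := hv
  refine le_antisymm (fun P hP ↦ Ideal.mem_span_singleton.2 ?_) ?_
  · have hdvd := linearForm_dvd_extendLine_restrictLine_sub (w := ![a, b]) hab P
    rwa [RingHom.mem_ker.1 hP, map_zero, zero_sub, dvd_neg] at hdvd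
  · exact (Ideal.span_singleton_le_iff_mem _).2 (restrictLine_linearForm v)

lemma linearForm_ne_zero [Nontrivial R] : linearForm v ≠ 0 := by
  intro h
  have h0 : v 0 = 0 := by simpa [linearForm] using congrArg (eval ![0, 1]) h
  have h1 : v 1 = 0 := by simpa [linearForm] using congrArg (eval ![1, 0]) h
  exact hv.ne_zero_or_ne_zero.elim (· h0) (· h1)

lemma prime_linearForm [IsDomain R] : Prime (linearForm v) := by
  rw [← Ideal.span_singleton_prime (linearForm_ne_zero hv), ← ker_restrictLine hv]
  exact RingHom.ker_isPrime _

end Line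

section Multiplicity

variable {k : Type*} [Field k]

lemma length_polynomial_quotient_span_singleton {p : Polynomial k} (hp : p ≠ 0) :
    Module.length k (Polynomial k ⧸ Ideal.span {p}) = p.natDegree := by
  have : Module.Finite k (Polynomial k ⧸ Ideal.span {p}) := (AdjoinRoot.powerBasis hp).finite
  rw [Module.length_eq_finrank, finrank_quotient_span_eq_natDegree]

variable {Q : MvPolynomial (Fin 2) k} {m : ℕ} (hQ : Q.IsHomogeneous m)
include hQ

lemma length_quotient_span_linearForm_pair {v : Fin 2 → k} (hv : IsCoprime (v 0) (v 1))
    (hQv : eval v Q ≠ 0) :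
    Module.length k (MvPolynomial (Fin 2) k ⧸ Ideal.span {linearForm v, Q}) = m := by
  have hne : Polynomial.C (eval v Q) * Polynomial.X ^ m ≠ 0 :=
    mul_ne_zero (Polynomial.C_ne_zero.2 hQv) (pow_ne_zero m Polynomial.X_ne_zero)
  rw [length_quotient_span_pair_eq_of_ker_eq (restrictLine_surjective hv) (ker_restrictLine hv),
    restrictLine_of_isHomogeneous v hQ, length_polynomial_quotient_span_singleton hne,
    Polynomial.natDegree_C_mul_X_pow m _ hQv]

theorem length_quotient_span_prod_linearForm_pair {c : k} (hc : c ≠ 0)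
    (s : Multiset (Fin 2 → k)) (hs : ∀ v ∈ s, IsCoprime (v 0) (v 1))
    (hQs : ∀ v ∈ s, eval v Q ≠ 0) :
    Module.length k
      (MvPolynomial (Fin 2) k ⧸ Ideal.span {C c * (s.map linearForm).prod, Q}) =
        (s.card * m : ℕ) := by
  induction s using Multiset.induction_on with
  | empty =>
    have hunit : IsUnit (C c * (Multiset.map linearForm 0).prod : MvPolynomial (Fin 2) k) := by
      simpa using hc
    have htop := Ideal.eq_top_of_isUnit_mem _ (Ideal.subset_span (Set.mem_insert _ {Q})) hunit
    have := Ideal.Quotient.subsingleton_iff.2 htop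
    rw [Module.length_eq_zero, Multiset.card_zero, zero_mul, Nat.cast_zero]
  | cons v s ih =>
    rw [Multiset.forall_mem_cons] at hs hQs
    have hprime := prime_linearForm hs.1
    have hndvd : ¬ linearForm v ∣ Q := fun h ↦ hQs.1 (eval_eq_zero_of_linearForm_dvd h)
    rw [Multiset.map_cons, Multiset.prod_cons, mul_left_comm,
      length_quotient_span_mul_pair (IsLeftCancelMulZero.mul_left_cancel_of_ne_zero hprime.ne_zero)
        (fun r hr ↦ (hprime.dvd_or_dvd hr).resolve_right hndvd),
      ih hs.2 hQs.2, length_quotient_span_linearForm_pair hQ hs.1 hQs.1, Multiset.card_cons]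
    push_cast
    ring

end Multiplicity

section Factorization

variable {k : Type*} [Field k] [IsAlgClosed k] {P : MvPolynomial (Fin 2) k} {n : ℕ}

lemma exists_eq_linearForm_mul (hP : P.IsHomogeneous (n + 1)) :
    ∃ v : Fin 2 → k, IsCoprime (v 0) (v 1) ∧
      ∃ P' : MvPolynomial (Fin 2) k, P'.IsHomogeneous n ∧ P = linearForm v * P' := by
  obtain ⟨p, hp⟩ : ∃ p : Polynomial k, aeval ![Polynomial.X, 1] P = p := ⟨_, rfl⟩
  have hhom : p.homogenize (n + 1) = P := Polynomial.homogenize_eq_of_isHomogeneous hP hp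
  by_cases hdeg : p.degree = 0
  · rw [Polynomial.eq_C_of_degree_eq_zero hdeg, Polynomial.homogenize_C, pow_succ'] at hhom
    refine ⟨![1, 0], isCoprime_one_left, -(C (p.coeff 0) * X 1 ^ n),
      (isHomogeneous_C_mul_X_pow _ _ _).neg, ?_⟩
    rw [← hhom]
    simp [linearForm, mul_left_comm]
  · obtain ⟨r, hr⟩ := IsAlgClosed.exists_root p hdeg
    have hpdeg : p.natDegree ≤ n + 1 := by
      rw [← hp, ← mul_one (n + 1)]
      exact aeval_natDegree_le P hP.totalDegree_le _
        (Fin.forall_fin_two.2 ⟨Polynomial.natDegree_X_le, by simp⟩)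
    have hq : (p /ₘ (Polynomial.X - Polynomial.C r)).natDegree ≤ n := by
      rw [Polynomial.natDegree_divByMonic _ (Polynomial.monic_X_sub_C r),
        Polynomial.natDegree_X_sub_C]
      lia
    refine ⟨![r, 1], isCoprime_one_right, (p /ₘ (Polynomial.X - Polynomial.C r)).homogenize n,
      Polynomial.isHomogeneous_homogenize _, ?_⟩
    rw [← hhom]
    conv_lhs => rw [← Polynomial.mul_divByMonic_eq_iff_isRoot.2 hr, add_comm n 1]
    rw [Polynomial.homogenize_mul _ _ (Polynomial.natDegree_X_sub_C_le r) hq]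
    simp [linearForm]

theorem exists_eq_C_mul_prod_linearForm (hP : P.IsHomogeneous n) :
    ∃ (c : k) (s : Multiset (Fin 2 → k)), s.card = n ∧ (∀ v ∈ s, IsCoprime (v 0) (v 1)) ∧
      P = C c * (s.map linearForm).prod := by
  induction n generalizing P with
  | zero =>
    refine ⟨coeff 0 P, 0, rfl, by simp, ?_⟩
    rw [Multiset.map_zero, Multiset.prod_zero, mul_one]
    exact totalDegree_eq_zero_iff_eq_C.1 (Nat.le_zero.1 hP.totalDegree_le)
  | succ n ih =>
    obtain ⟨v, hv, P', hP', rfl⟩ := exists_eq_linearForm_mul hP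
    obtain ⟨c, s, rfl, hs, rfl⟩ := ih hP'
    refine ⟨c, v ::ₘ s, Multiset.card_cons v s, Multiset.forall_mem_cons.2 ⟨hv, hs⟩, ?_⟩
    rw [Multiset.map_cons, Multiset.prod_cons, mul_left_comm]

end Factorization

lemma finite_and_finrank_eq_of_length_eq {k V : Type*} [DivisionRing k] [AddCommGroup V]
    [Module k V] {d : ℕ} (h : Module.length k V = d) :
    Module.Finite k V ∧ Module.finrank k V = d := by
  rw [Module.length_eq_rank, Cardinal.toENat_eq_natCast] at h
  exact ⟨Module.finite_of_rank_eq_nat h, Module.finrank_eq_of_rank_eq h⟩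

theorem stmt14 {k : Type*} [Field k] [IsAlgClosed k]
    (P Q : MvPolynomial (Fin 2) k) (n m : ℕ) (hn : 1 ≤ n) (hm : 1 ≤ m)
    (hPh : P.IsHomogeneous n) (hQh : Q.IsHomogeneous m)
    (hP : P ≠ 0) (hQ : Q ≠ 0)
    (hlead : ∀ a b : k, ¬(a = 0 ∧ b = 0) →
      ¬(eval ![a, b] P = 0 ∧ eval ![a, b] Q = 0)) :
    FiniteDimensional k (MvPolynomial (Fin 2) k ⧸ Ideal.span {P, Q}) ∧
    Module.finrank k (MvPolynomial (Fin 2) k ⧸ Ideal.span {P, Q}) = n * m := by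
  obtain ⟨c, s, rfl, hs, rfl⟩ := exists_eq_C_mul_prod_linearForm hPh
  have hc : c ≠ 0 := C_ne_zero.1 (left_ne_zero_of_mul hP)
  have hQs : ∀ v ∈ s, eval v Q ≠ 0 := by
    intro v hv hQv
    have hPv : eval v (C c * (s.map linearForm).prod) = 0 := eval_eq_zero_of_linearForm_dvd
      ((Multiset.dvd_prod (Multiset.mem_map_of_mem linearForm hv)).mul_left (C c))
    rw [← FinVec.etaExpand_eq v] at hPv hQv
    exact hlead (v 0) (v 1) (not_and_or.2 (hs v hv).ne_zero_or_ne_zero) ⟨hPv, hQv⟩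
  exact finite_and_finrank_eq_of_length_eq
    (length_quotient_span_prod_linearForm_pair hQh hc s hs hQs)
end
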